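/- Let f ∈ S*_car, let a₂ = f''(0)/2, and let f₂(z) = z + a₂ z² be the second partial sum of f. Then: (i) f₂(z) ≠ 0 and Re(z f₂'(z)/f₂(z)) > 0 for all z with 0 < |z| < 1/2 (f₂ is starlike in |z| < 1/2); (ii) f₂'(z) ≠ 0 and Re(1 + z f₂''(z)/f₂'(z)) > 0 for all z with |z| < 1/4 (f₂ is convex in |z| < 1/4); (iii) for every 0 < ρ ≤ 1/3 the function z ↦ f₂(ρz)/ρ = z + a₂ρ z² belongs to S*_car. -/

import Mathlib

open Complex Metric

def omegaCar : Set ℂ := {w : ℂ | ∃ u : ℂ, ‖u‖ < 1 ∧ w = 1 + u + u ^ 2 / 2}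

def SCar (f : ℂ → ℂ) : Prop :=
  DifferentiableOn ℂ f (Metric.ball (0 : ℂ) 1) ∧ f 0 = 0 ∧ deriv f 0 = 1 ∧
    (∀ z : ℂ, ‖z‖ < 1 → z ≠ 0 → f z ≠ 0) ∧
    (∀ z : ℂ, ‖z‖ < 1 → z ≠ 0 → z * deriv f z / f z ∈ omegaCar)

/-!
Since `φ_car u = ((1 + u) ^ 2 + 1) / 2`, the map `φ_car` is inverted on its image by a branch of
the square root, so the Schwarz lemma applied to `φ_car⁻¹ ∘ p`, with `p z = z f'(z) / f(z)`, gives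
`‖a₂‖ = ‖p'(0)‖ ≤ ‖φ_car'(0)‖ = 1`. For a quadratic `q z = z + b z ^ 2`, both `z q' / q` and
`1 + z q'' / q'` have the form `1 + w / (1 + w)`, with `w = b z` and `w = 2 b z` respectively, and
`‖w‖ < r` forces `‖w / (1 + w)‖ < r / (1 - r)`. For `r = 1 / 2` this bound is `1`, which gives a
positive real part; for `r = 1 / 3` it is `1 / 2`, and the disk of radius `1 / 2` about `1` lies in
`Ω_car`.
-/

theorem sq_mem_slitPlane {z : ℂ} (hz : 0 < z.re) : z ^ 2 ∈ slitPlane := by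
  rw [mem_slitPlane_iff, sq, mul_re, mul_im]
  by_cases him : z.im = 0
  · left
    simpa [him] using hz.ne'
  · right
    have : z.re * z.im ≠ 0 := mul_ne_zero hz.ne' him
    contrapose! this
    linarith

theorem re_one_add_pos {w : ℂ} (hw : ‖w‖ < 1) : 0 < (1 + w).re := by
  have : -1 < w.re := (abs_lt.1 ((abs_re_le_norm w).trans_lt hw)).1
  rw [add_re, one_re]
  linarith

theorem norm_div_one_add_lt {𝕜 : Type*} [NormedDivisionRing 𝕜] {w : 𝕜} {r : ℝ} (hw : ‖w‖ < r)
    (hr : r < 1) : ‖w / (1 + w)‖ < r / (1 - r) := by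
  have hlower : 1 - r < ‖1 + w‖ := by
    have : ‖(1 : 𝕜)‖ - ‖w‖ ≤ ‖1 + w‖ := norm_sub_le_norm_add 1 w
    rw [norm_one] at this
    linarith
  have hr' : 0 < 1 - r := sub_pos.2 hr
  rw [norm_div]
  exact div_lt_div₀ hw hlower.le ((norm_nonneg w).trans hw.le) hr'

theorem re_one_add_div_one_add_pos {w : ℂ} (hw : ‖w‖ < 1 / 2) : 0 < (1 + w / (1 + w)).re :=
  re_one_add_pos ((norm_div_one_add_lt hw one_half_lt_one).trans_eq (by norm_num))

theorem norm_deriv_le_of_mapsTo_image {φ ψ p : ℂ → ℂ} {c : ℂ} {R : ℝ} (hR : 0 < R)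
    (hφ : DifferentiableAt ℂ φ c) (hψ : DifferentiableOn ℂ ψ (φ '' ball c R))
    (hψφ : Set.LeftInvOn ψ φ (ball c R)) (hp : DifferentiableOn ℂ p (ball c R))
    (hmaps : Set.MapsTo p (ball c R) (φ '' ball c R)) (hpc : p c = φ c) :
    ‖deriv p c‖ ≤ ‖deriv φ c‖ := by
  have hc : c ∈ ball c R := mem_ball_self hR
  set ω : ℂ → ℂ := ψ ∘ p
  have hωc : ω c = c := (congrArg ψ hpc).trans (hψφ hc)
  have hω : DifferentiableOn ℂ ω (ball c R) := hψ.comp hp hmaps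
  have hω_maps : Set.MapsTo ω (ball c R) (ball c R) := by
    intro z hz
    obtain ⟨u, hu, hpu⟩ := hmaps hz
    have : ω z = u := (congrArg ψ hpu.symm).trans (hψφ hu)
    rwa [this]
  have hp_eq : p =ᶠ[nhds c] φ ∘ ω := by
    filter_upwards [ball_mem_nhds c hR] with z hz
    obtain ⟨u, hu, hpu⟩ := hmaps hz
    simp only [ω, Function.comp_apply, ← hpu, hψφ hu]
  have hschwarz : ‖deriv ω c‖ ≤ 1 :=
    norm_deriv_le_one_of_mapsTo_ball hω
      (by rw [hωc]; exact hω_maps.mono_right ball_subset_closedBall) hR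
  have hchain : deriv p c = deriv φ c * deriv ω c := by
    rw [hp_eq.deriv_eq, deriv_comp c (by rwa [hωc]) (hω.differentiableAt (ball_mem_nhds c hR)), hωc]
  rw [hchain, norm_mul]
  exact mul_le_of_le_one_right (norm_nonneg _) hschwarz

section DerivDivDslope

variable {𝕜 : Type*} [NontriviallyNormedField 𝕜] [CompleteSpace 𝕜] [CharZero 𝕜]
  {f : 𝕜 → 𝕜} {c : 𝕜}

theorem hasDerivAt_dslope_same (hf : AnalyticAt 𝕜 f c) :
    HasDerivAt (dslope f c) (deriv (deriv f) c / 2) c := by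
  have hseries := hf.hasFPowerSeriesAt.has_fpower_series_dslope_fslope
  refine hseries.hasDerivAt.congr_deriv ?_
  change FormalMultilinearSeries.coeff _ 1 = _
  rw [FormalMultilinearSeries.coeff_fslope, FormalMultilinearSeries.coeff_ofScalars]
  simp [iteratedDeriv_succ]

theorem deriv_deriv_div_dslope (hf : AnalyticAt 𝕜 f c) (hf' : deriv f c ≠ 0) :
    deriv (fun z ↦ deriv f z / dslope f c z) c = deriv (deriv f) c / (2 * deriv f c) := by
  have hquot := hf.deriv.differentiableAt.hasDerivAt.div (hasDerivAt_dslope_same hf)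
    (by rwa [dslope_same])
  refine HasDerivAt.deriv (hquot.congr_deriv ?_)
  rw [dslope_same]
  field_simp
  ring

end DerivDivDslope

/-- The function `φ_car`, which maps the unit disk onto `omegaCar`. -/
noncomputable def phiCar (u : ℂ) : ℂ := 1 + u + u ^ 2 / 2

/-- The inverse of `phiCar` on the half-plane `0 < (1 + u).re`, given by the principal branch of the
square root. -/
noncomputable def phiCarInv (w : ℂ) : ℂ := sqrt (2 * w - 1) - 1

theorem omegaCar_eq_image : omegaCar = phiCar '' ball 0 1 := by
  ext w
  simp only [omegaCar, phiCar, Set.mem_ofPred_eq, Set.mem_image, mem_ball_zero_iff, eq_comm]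

theorem hasDerivAt_phiCar (u : ℂ) : HasDerivAt phiCar (1 + u) u := by
  have := ((hasDerivAt_id' u).const_add 1).add (((hasDerivAt_id' u).pow 2).div_const 2)
  exact this.congr_deriv (by simp)

theorem two_mul_phiCar_sub_one (u : ℂ) : 2 * phiCar u - 1 = (1 + u) ^ 2 := by
  rw [phiCar]
  ring

theorem phiCarInv_phiCar {u : ℂ} (hu : 0 < (1 + u).re) : phiCarInv (phiCar u) = u := by
  rw [phiCarInv, two_mul_phiCar_sub_one, sqrt, sq_cpow_two_inv hu, add_sub_cancel_left]

theorem differentiableAt_phiCarInv {u : ℂ} (hu : 0 < (1 + u).re) :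
    DifferentiableAt ℂ phiCarInv (phiCar u) := by
  have hslit : 2 * phiCar u - 1 ∈ slitPlane := by
    rw [two_mul_phiCar_sub_one]
    exact sq_mem_slitPlane hu
  have hinner : DifferentiableAt ℂ (fun w : ℂ ↦ 2 * w - 1) (phiCar u) := by fun_prop
  exact ((differentiableAt_sqrt hslit).comp (phiCar u) hinner).sub_const 1

theorem norm_deriv_le_one_of_mapsTo_omegaCar {p : ℂ → ℂ} (hp : DifferentiableOn ℂ p (ball 0 1))
    (hmaps : Set.MapsTo p (ball 0 1) omegaCar) (hp0 : p 0 = 1) : ‖deriv p 0‖ ≤ 1 := by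
  have hre : ∀ u ∈ ball (0 : ℂ) 1, 0 < (1 + u).re := fun u hu ↦
    re_one_add_pos (mem_ball_zero_iff.1 hu)
  have hinv : DifferentiableOn ℂ phiCarInv (phiCar '' ball 0 1) := by
    rintro _ ⟨u, hu, rfl⟩
    exact (differentiableAt_phiCarInv (hre u hu)).differentiableWithinAt
  rw [omegaCar_eq_image] at hmaps
  have := norm_deriv_le_of_mapsTo_image one_pos (hasDerivAt_phiCar 0).differentiableAt hinv
    (fun u hu ↦ phiCarInv_phiCar (hre u hu)) hp hmaps (by simp [hp0, phiCar])
  simpa [(hasDerivAt_phiCar 0).deriv] using this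

theorem one_mem_omegaCar : (1 : ℂ) ∈ omegaCar := ⟨0, by simp, by simp⟩

theorem ball_one_half_subset_omegaCar : ball (1 : ℂ) (1 / 2) ⊆ omegaCar := by
  intro w hw
  obtain ⟨s, hs⟩ := Complex.isSquare (2 * w - 1)
  -- The two solutions `s - 1` and `-s - 1` of `phiCar u = w` have product `2 * (1 - w)`.
  have hprod : ‖s - 1‖ * ‖-s - 1‖ < 1 := by
    rw [← norm_mul, show (s - 1) * (-s - 1) = -(2 * (w - 1)) by linear_combination hs, norm_neg,
      norm_mul, Complex.norm_two, ← dist_eq]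
    linarith [mem_ball.1 hw]
  by_cases hs1 : ‖s - 1‖ < 1
  · exact ⟨s - 1, hs1, by linear_combination hs / 2⟩
  · refine ⟨-s - 1, ?_, by linear_combination hs / 2⟩
    exact lt_of_not_ge fun h ↦ hprod.not_ge (one_le_mul_of_one_le_of_one_le (not_lt.1 hs1) h)

namespace SCar

variable {f : ℂ → ℂ}

theorem deriv_div_dslope_mem_omegaCar (hf : SCar f) {z : ℂ} (hz : z ∈ ball (0 : ℂ) 1) :
    deriv f z / dslope f 0 z ∈ omegaCar := by
  obtain ⟨-, hf0, hf'0, -, hmem⟩ := hf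
  rcases eq_or_ne z 0 with rfl | hz0
  · rw [dslope_same, hf'0, div_one]
    exact one_mem_omegaCar
  · convert hmem z (mem_ball_zero_iff.1 hz) hz0 using 1
    rw [dslope_of_ne f hz0, slope_def_field, hf0, sub_zero, sub_zero, div_div_eq_mul_div, mul_comm]

theorem dslope_ne_zero (hf : SCar f) {z : ℂ} (hz : z ∈ ball (0 : ℂ) 1) : dslope f 0 z ≠ 0 := by
  obtain ⟨-, hf0, hf'0, hne, -⟩ := hf
  rcases eq_or_ne z 0 with rfl | hz0
  · rw [dslope_same, hf'0]
    exact one_ne_zero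
  · rw [dslope_of_ne f hz0, slope_def_field, hf0, sub_zero, sub_zero]
    exact div_ne_zero (hne z (mem_ball_zero_iff.1 hz) hz0) hz0

theorem norm_deriv_deriv_div_two_le (hf : SCar f) : ‖deriv (deriv f) 0 / 2‖ ≤ 1 := by
  have hdiff : DifferentiableOn ℂ f (ball 0 1) := hf.1
  have hf'0 : deriv f 0 = 1 := hf.2.2.1
  have hball : ball (0 : ℂ) 1 ∈ nhds 0 := ball_mem_nhds 0 one_pos
  have hquot : DifferentiableOn ℂ (fun z ↦ deriv f z / dslope f 0 z) (ball 0 1) :=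
    (hdiff.deriv isOpen_ball).fun_div ((differentiableOn_dslope hball).2 hdiff)
      fun _ hz ↦ hf.dslope_ne_zero hz
  have hbound := norm_deriv_le_one_of_mapsTo_omegaCar hquot
    (fun _ hz ↦ hf.deriv_div_dslope_mem_omegaCar hz) (by rw [dslope_same, hf'0, div_one])
  rwa [deriv_deriv_div_dslope (hdiff.analyticAt hball) (by simp [hf'0]), hf'0, mul_one] at hbound

end SCar

section Quadratic

variable {𝕜 : Type*} [NontriviallyNormedField 𝕜]

theorem deriv_add_mul_sq (b z : 𝕜) : deriv (fun w ↦ w + b * w ^ 2) z = 1 + 2 * b * z := by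
  have := (hasDerivAt_id' z).add (((hasDerivAt_id' z).pow 2).const_mul b)
  exact HasDerivAt.deriv (this.congr_deriv (by simp; ring))

theorem deriv_deriv_add_mul_sq (b z : 𝕜) :
    deriv (deriv fun w ↦ w + b * w ^ 2) z = 2 * b := by
  rw [funext (deriv_add_mul_sq b)]
  simp

theorem add_mul_sq_ne_zero {b z : 𝕜} (hz : z ≠ 0) (hbz : 1 + b * z ≠ 0) : z + b * z ^ 2 ≠ 0 := by
  rw [show z + b * z ^ 2 = z * (1 + b * z) by ring]
  exact mul_ne_zero hz hbz

theorem mul_deriv_div_add_mul_sq {b z : 𝕜} (hz : z ≠ 0) (hbz : 1 + b * z ≠ 0) :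
    z * deriv (fun w ↦ w + b * w ^ 2) z / (z + b * z ^ 2) = 1 + b * z / (1 + b * z) := by
  rw [deriv_add_mul_sq, show z + b * z ^ 2 = z * (1 + b * z) by ring, mul_div_mul_left _ _ hz]
  field_simp
  ring

end Quadratic

theorem one_add_ne_zero_of_norm_lt_one {w : ℂ} (hw : ‖w‖ < 1) : 1 + w ≠ 0 :=
  slitPlane_ne_zero (mem_slitPlane_of_norm_lt_one hw)

theorem starlike_add_mul_sq {b z : ℂ} (hz : z ≠ 0) (hbz : ‖b * z‖ < 1 / 2) :
    z + b * z ^ 2 ≠ 0 ∧ 0 < (z * deriv (fun w ↦ w + b * w ^ 2) z / (z + b * z ^ 2)).re := by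
  have hne : 1 + b * z ≠ 0 := one_add_ne_zero_of_norm_lt_one (hbz.trans one_half_lt_one)
  refine ⟨add_mul_sq_ne_zero hz hne, ?_⟩
  rw [mul_deriv_div_add_mul_sq hz hne]
  exact re_one_add_div_one_add_pos hbz

theorem convex_add_mul_sq {b z : ℂ} (hbz : ‖b * z‖ < 1 / 4) :
    deriv (fun w ↦ w + b * w ^ 2) z ≠ 0 ∧
      0 < (1 + z * deriv (deriv fun w ↦ w + b * w ^ 2) z /
        deriv (fun w ↦ w + b * w ^ 2) z).re := by
  have hw : ‖2 * b * z‖ < 1 / 2 := by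
    rw [mul_assoc, norm_mul, Complex.norm_two]
    linarith
  rw [deriv_deriv_add_mul_sq, deriv_add_mul_sq, mul_comm z]
  exact ⟨one_add_ne_zero_of_norm_lt_one (hw.trans one_half_lt_one), re_one_add_div_one_add_pos hw⟩

theorem sCar_add_mul_sq {b : ℂ} (hb : ‖b‖ ≤ 1 / 3) : SCar fun z ↦ z + b * z ^ 2 := by
  have hbz : ∀ z : ℂ, ‖z‖ < 1 → ‖b * z‖ < 1 / 3 := by
    intro z hz
    rw [norm_mul]
    nlinarith [norm_nonneg z]
  have hne : ∀ z : ℂ, ‖z‖ < 1 → 1 + b * z ≠ 0 := fun z hz ↦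
    one_add_ne_zero_of_norm_lt_one ((hbz z hz).trans (by norm_num))
  refine ⟨by fun_prop, by simp, by simp [deriv_add_mul_sq],
    fun z hz hz0 ↦ add_mul_sq_ne_zero hz0 (hne z hz), fun z hz hz0 ↦ ?_⟩
  rw [mul_deriv_div_add_mul_sq hz0 (hne z hz)]
  apply ball_one_half_subset_omegaCar
  rw [mem_ball_iff_norm, add_sub_cancel_left]
  exact (norm_div_one_add_lt (hbz z hz) (by norm_num)).trans_eq (by norm_num)

theorem stmt_14 (f : ℂ → ℂ) (hf : SCar f) (a₂ : ℂ) (ha₂ : a₂ = deriv (deriv f) 0 / 2) :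
    (∀ z : ℂ, 0 < ‖z‖ → ‖z‖ < 1 / 2 →
      z + a₂ * z ^ 2 ≠ 0 ∧
      0 < (z * deriv (fun w : ℂ => w + a₂ * w ^ 2) z / (z + a₂ * z ^ 2)).re) ∧
    (∀ z : ℂ, ‖z‖ < 1 / 4 →
      deriv (fun w : ℂ => w + a₂ * w ^ 2) z ≠ 0 ∧
      0 < (1 + z * deriv (deriv (fun w : ℂ => w + a₂ * w ^ 2)) z /
        deriv (fun w : ℂ => w + a₂ * w ^ 2) z).re) ∧
    (∀ ρ : ℝ, 0 < ρ → ρ ≤ 1 / 3 → SCar (fun z : ℂ => z + a₂ * (ρ : ℂ) * z ^ 2)) := by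
  have ha : ‖a₂‖ ≤ 1 := ha₂ ▸ hf.norm_deriv_deriv_div_two_le
  have haz : ∀ z : ℂ, ‖a₂ * z‖ ≤ ‖z‖ := fun z ↦ by
    rw [norm_mul]
    exact mul_le_of_le_one_left (norm_nonneg z) ha
  refine ⟨fun z hz0 hz ↦ starlike_add_mul_sq (norm_pos_iff.1 hz0) ((haz z).trans_lt hz),
    fun z hz ↦ convex_add_mul_sq ((haz z).trans_lt hz),
    fun ρ hρ hρ_le ↦ sCar_add_mul_sq ((haz ρ).trans ?_)⟩
  rwa [norm_real, Real.norm_of_nonneg hρ.le]
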